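/- For every odd prime p ≥ 5, the acyclic chromatic index of the complete bipartite graph K_{p²,p²} equals p² + 2; that is, K_{p²,p²} admits an acyclic proper edge coloring with p²+2 colors and admits no acyclic proper edge coloring with fewer colors. -/

import Mathlib

open SimpleGraph

/-- A proper edge coloring of `G` with `k` colors: any two distinct edges
sharing a vertex receive different colors. -/
def IsProperEdgeColoring {V : Type*} (G : SimpleGraph V) {k : ℕ}
    (C : G.edgeSet → Fin k) : Prop :=
  ∀ e f : G.edgeSet, e ≠ f →
    (∃ v : V, v ∈ (e : Sym2 V) ∧ v ∈ (f : Sym2 V)) → C e ≠ C f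

/-- An edge coloring is acyclic if no cycle of `G` is bichromatic, i.e. no cycle
has all its edges colored with only two colors. -/
def IsAcyclicEdgeColoring {V : Type*} (G : SimpleGraph V) {k : ℕ}
    (C : G.edgeSet → Fin k) : Prop :=
  ∀ (v : V) (w : G.Walk v v), w.IsCycle →
    ¬ ∃ c₁ c₂ : Fin k, ∀ (e : Sym2 V) (he : e ∈ w.edges),
      C ⟨e, w.edges_subset_edgeSet he⟩ = c₁ ∨ C ⟨e, w.edges_subset_edgeSet he⟩ = c₂

/-- The acyclic chromatic index: the least `k` such that `G` admits an acyclic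
proper edge coloring with `k` colors. -/
noncomputable def acyclicChromaticIndex {V : Type*} (G : SimpleGraph V) : ℕ :=
  sInf {k : ℕ | ∃ C : G.edgeSet → Fin k,
    IsProperEdgeColoring G C ∧ IsAcyclicEdgeColoring G C}

/-!
Lower bound. Let `n` be odd and suppose that `n + 1` colors suffice for `K_{n,n}`. Then every row
misses exactly one color, and distinct rows miss distinct colors, for otherwise two colors would be
present at every row. So all but one color `c₀` is missed by exactly one row. Extend each color
class `a` to a permutation `σ a` from rows to columns. By acyclicity every cycle of
`(σ b)⁻¹ * σ a` contains a row that misses `a` or `b`. Hence `(σ c₀)⁻¹ * σ a` is an `n`-cycle,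
which is even, so all `σ a` have the same sign. However, if `l` is the row missing `a` and `b` is
the color of the edge from `l` to column `σ a l`, then `(σ b)⁻¹ * σ a` fixes `l` and is cyclic on
the other `n - 1` rows, which makes it odd.

Upper bound. Index rows, columns and base colors by `(ZMod p)²` and let `ω` be a primitive root.
Two base colors differ by a product of two piecewise constant shears of `(ZMod p)²`, which is
transitive since `ω` is not a square. The two base colors thus form a Hamiltonian cycle, and it
suffices to recolor one edge of each base color. Two matchings with two extra colors do this
without creating new cycles: following a base color and then the first extra color is, away from a
line, an affine map with double eigenvalue `ω`, each of whose orbits reaches the line or a row whose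
edge was recolored.
-/

section Forest

variable {V : Type*} {G : SimpleGraph V} {k : ℕ} {C : G.edgeSet → Fin k} {a b : Fin k}

theorem exists_isPath_length_eq_of_isAcyclic (hG : G.IsAcyclic) {W : Set V} (hW : W.Nonempty)
    (hnbr : ∀ v ∈ W, ¬ (G.neighborSet v ∩ W).Subsingleton) (m : ℕ) :
    ∃ (u v : V) (q : G.Walk u v), q.IsPath ∧ v ∈ W ∧ q.length = m := by
  induction m with
  | zero =>
    obtain ⟨v, hv⟩ := hW
    exact ⟨v, v, .nil, .nil, hv, rfl⟩
  | succ m ih =>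
    obtain ⟨u, v, q, hq, hv, hlen⟩ := ih
    obtain ⟨w, ⟨hvw, hw⟩, hwq⟩ : ∃ w ∈ G.neighborSet v ∩ W, w ∉ q.support := by
      by_contra! hsupp
      refine hnbr v hv fun w hw w' hw' ↦ ?_
      exact (hG.eq_penultimate_of_adj_end hq hw.1 (hsupp w hw)).trans
        (hG.eq_penultimate_of_adj_end hq hw'.1 (hsupp w' hw')).symm
    exact ⟨u, w, q.concat hvw, hq.concat hwq hvw, hw, (q.length_concat hvw).trans (by rw [hlen])⟩

theorem isAcyclic_iff_exists_subsingleton_neighborSet_inter [Finite V] :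
    G.IsAcyclic ↔ ∀ W : Set V, W.Nonempty → ∃ v ∈ W, (G.neighborSet v ∩ W).Subsingleton := by
  constructor
  · intro hG W hW
    by_contra! hnbr
    have := Fintype.ofFinite V
    obtain ⟨u, v, q, hq, -, hlen⟩ := exists_isPath_length_eq_of_isAcyclic hG hW
      (by simpa only [Set.not_subsingleton_iff] using hnbr) (Fintype.card V)
    exact hq.length_lt.ne hlen
  · intro h v w hw
    obtain ⟨u, hu, hsub⟩ := h {u | u ∈ w.support} ⟨v, w.start_mem_support⟩
    have hcycle : w.toSubgraph.neighborSet u ⊆ G.neighborSet u ∩ {u | u ∈ w.support} :=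
      fun x hx ↦ ⟨hx.adj_sub, w.mem_verts_toSubgraph.1 hx.snd_mem⟩
    have hle := Set.ncard_le_one_iff_subsingleton.2 (hsub.anti hcycle)
    rw [hw.ncard_neighborSet_toSubgraph_eq_two hu] at hle
    omega

/-- The subgraph of `G` formed by the edges that `C` colors `a` or `b`. -/
def twoColorSubgraph (C : G.edgeSet → Fin k) (a b : Fin k) : SimpleGraph V :=
  fromEdgeSet {e | ∃ he : e ∈ G.edgeSet, C ⟨e, he⟩ = a ∨ C ⟨e, he⟩ = b}

theorem twoColorSubgraph_adj {u v : V} :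
    (twoColorSubgraph C a b).Adj u v ↔
      ∃ huv : G.Adj u v, C ⟨s(u, v), huv⟩ = a ∨ C ⟨s(u, v), huv⟩ = b := by
  rw [twoColorSubgraph, fromEdgeSet_adj]
  exact and_iff_left_of_imp fun ⟨huv, _⟩ ↦ G.ne_of_adj huv

theorem twoColorSubgraph_le : twoColorSubgraph C a b ≤ G :=
  fun _ _ h ↦ (twoColorSubgraph_adj.1 h).1

theorem mem_edgeSet_twoColorSubgraph {e : Sym2 V} (he : e ∈ G.edgeSet) :
    e ∈ (twoColorSubgraph C a b).edgeSet ↔ C ⟨e, he⟩ = a ∨ C ⟨e, he⟩ = b := by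
  induction e with
  | _ u v => exact twoColorSubgraph_adj.trans (exists_prop_of_true he)

theorem isAcyclicEdgeColoring_iff_forall_isAcyclic :
    IsAcyclicEdgeColoring G C ↔ ∀ a b, (twoColorSubgraph C a b).IsAcyclic := by
  constructor
  · intro hC a b v w hw
    refine hC v (w.mapLe twoColorSubgraph_le) ((Walk.isCycle_mapLe _).2 hw)
      ⟨a, b, fun e he ↦ (mem_edgeSet_twoColorSubgraph _).1 (w.edges_subset_edgeSet ?_)⟩
    simpa only [Walk.edges_mapLe_eq_edges] using he
  · rintro h v w hw ⟨a, b, hab⟩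
    exact h a b _ (hw.transfer fun e he ↦ (mem_edgeSet_twoColorSubgraph _).2 (hab e he))

end Forest

section ColorArray

variable {L R K L' R' K' : Type*} {c : L → R → K} {a b : K} {S : Set L}

/-- The array `c`, read as a coloring of the edges between rows `L` and columns `R`, is proper. -/
structure IsProperArray (c : L → R → K) : Prop where
  row_injective : ∀ x, (c x).Injective
  col_injective : ∀ r, (fun x ↦ c x r).Injective

/-- From every row in `S`, following an edge colored `a` and then one colored `b` leads back to a
row in `S`: for finite `S`, the rows in `S` span a union of cycles alternating between
`a` and `b`. -/
def IsAlternatingOn (c : L → R → K) (a b : K) (S : Set L) : Prop :=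
  ∀ x ∈ S, ∃ r, c x r = a ∧ ∃ x' ∈ S, c x' r = b

/-- The array form of an acyclic proper edge coloring of a finite complete bipartite graph. -/
structure IsAcyclicArray (c : L → R → K) : Prop extends IsProperArray c where
  not_isAlternatingOn : ∀ ⦃a b : K⦄, a ≠ b → ∀ ⦃S : Set L⦄, S.Nonempty → ¬ IsAlternatingOn c a b S

theorem IsAlternatingOn.symm [Finite L] (hc : IsProperArray c) (h : IsAlternatingOn c a b S) :
    IsAlternatingOn c b a S := by
  choose r hr x' hx' hr' using h
  let next : S → S := fun x ↦ ⟨x' x x.2, hx' x x.2⟩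
  have hnext : next.Injective := by
    rintro ⟨x, hx⟩ ⟨y, hy⟩ hxy
    have hxy' : x' x hx = x' y hy := congrArg Subtype.val hxy
    have hcol : r x hx = r y hy :=
      hc.row_injective _ ((hr' x hx).trans ((hxy' ▸ hr' y hy).symm))
    exact Subtype.ext (hc.col_injective (r x hx) ((hr x hx).trans (hcol ▸ hr y hy).symm))
  intro y hy
  obtain ⟨⟨x, hx⟩, hxy⟩ := Finite.surjective_of_injective hnext ⟨y, hy⟩
  obtain rfl : x' x hx = y := congrArg Subtype.val hxy
  exact ⟨r x hx, hr' x hx, x, hx, hr x hx⟩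

theorem IsAcyclicArray.relabel {c : L → R → K} (hc : IsAcyclicArray c) {f : L' → L} {g : R' → R}
    {φ : K → K'} (hf : f.Injective) (hg : g.Injective) (hφ : φ.Injective) :
    IsAcyclicArray fun x r ↦ φ (c (f x) (g r)) where
  row_injective x := hφ.comp ((hc.row_injective (f x)).comp hg)
  col_injective r := hφ.comp ((hc.col_injective (g r)).comp hf)
  not_isAlternatingOn := by
    rintro a b hab S ⟨x₀, hx₀⟩ halt
    obtain ⟨r₀, rfl, x₁, -, rfl⟩ := halt x₀ hx₀
    refine hc.not_isAlternatingOn (fun h ↦ hab (congrArg φ h)) ⟨f x₀, Set.mem_image_of_mem f hx₀⟩ ?_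
    rintro _ ⟨x, hx, rfl⟩
    obtain ⟨r, hra, x', hx', hrb⟩ := halt x hx
    exact ⟨g r, hφ hra, f x', Set.mem_image_of_mem f hx', hφ hrb⟩

/-- The edge of the complete bipartite graph joining row `x` and column `r`. -/
def bipartiteEdge (x : L) (r : R) : (completeBipartiteGraph L R).edgeSet :=
  ⟨s(.inl x, .inr r), by simp⟩

theorem bipartiteEdge_inj {x x' : L} {r r' : R} :
    bipartiteEdge x r = bipartiteEdge x' r' ↔ x = x' ∧ r = r' := by
  simp [bipartiteEdge]

theorem bipartiteEdge_surjective :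
    (fun q : L × R ↦ bipartiteEdge q.1 q.2).Surjective := by
  rintro ⟨e, he⟩
  obtain ⟨q, rfl⟩ := (edgeSet_completeBipartiteGraph (W₁ := L) (W₂ := R)) ▸ he
  exact ⟨q, rfl⟩

theorem bipartiteEdge_bijective :
    (fun q : L × R ↦ bipartiteEdge q.1 q.2).Bijective :=
  ⟨fun _ _ h ↦ Prod.ext_iff.2 (bipartiteEdge_inj.1 h), bipartiteEdge_surjective⟩

theorem exists_edgeColoring_bipartiteEdge_eq (c : L → R → K) :
    ∃ C : (completeBipartiteGraph L R).edgeSet → K, ∀ x r, C (bipartiteEdge x r) = c x r := by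
  let e := Equiv.ofBijective _ (bipartiteEdge_bijective (L := L) (R := R))
  exact ⟨fun x ↦ Function.uncurry c (e.symm x),
    fun x r ↦ congrArg (Function.uncurry c) (e.symm_apply_apply (x, r))⟩

variable {k : ℕ} {C : (completeBipartiteGraph L R).edgeSet → Fin k}

theorem isProperEdgeColoring_iff_isProperArray :
    IsProperEdgeColoring _ C ↔ IsProperArray fun x r ↦ C (bipartiteEdge x r) := by
  constructor
  · intro hC
    refine ⟨fun x r r' h ↦ ?_, fun r x x' h ↦ ?_⟩
    · by_contra hne
      exact hC _ _ (fun he ↦ hne (bipartiteEdge_inj.1 he).2)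
        ⟨.inl x, Sym2.mem_mk_left _ _, Sym2.mem_mk_left _ _⟩ h
    · by_contra hne
      exact hC _ _ (fun he ↦ hne (bipartiteEdge_inj.1 he).1)
        ⟨.inr r, Sym2.mem_mk_right _ _, Sym2.mem_mk_right _ _⟩ h
  · rintro hc e f hne ⟨v, hve, hvf⟩ h
    obtain ⟨⟨x, r⟩, rfl⟩ := bipartiteEdge_surjective e
    obtain ⟨⟨x', r'⟩, rfl⟩ := bipartiteEdge_surjective f
    rcases v with v | v
    · obtain ⟨rfl, rfl⟩ : v = x ∧ v = x' := by simpa [bipartiteEdge] using And.intro hve hvf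
      exact hne (bipartiteEdge_inj.2 ⟨rfl, hc.row_injective v h⟩)
    · obtain ⟨rfl, rfl⟩ : v = r ∧ v = r' := by simpa [bipartiteEdge] using And.intro hve hvf
      exact hne (bipartiteEdge_inj.2 ⟨hc.col_injective v h, rfl⟩)

theorem neighborSet_twoColorSubgraph_inl {a b : Fin k} (x : L) :
    (twoColorSubgraph C a b).neighborSet (.inl x) =
      .inr '' {r | C (bipartiteEdge x r) = a ∨ C (bipartiteEdge x r) = b} := by
  ext (x' | r)
  · simp [twoColorSubgraph_adj]
  · simp [twoColorSubgraph_adj, bipartiteEdge]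

theorem neighborSet_twoColorSubgraph_inr {a b : Fin k} (r : R) :
    (twoColorSubgraph C a b).neighborSet (.inr r) =
      .inl '' {x | C (bipartiteEdge x r) = a ∨ C (bipartiteEdge x r) = b} := by
  ext (x | r')
  · rw [mem_neighborSet, adj_comm, ← mem_neighborSet, neighborSet_twoColorSubgraph_inl]
    simp
  · simp [twoColorSubgraph_adj]

theorem IsAcyclicEdgeColoring.not_isAlternatingOn [Finite L] [Finite R]
    (hC : IsProperEdgeColoring _ C) (hacyc : IsAcyclicEdgeColoring _ C) {a b : Fin k} (hab : a ≠ b)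
    {S : Set L} (hS : S.Nonempty) : ¬ IsAlternatingOn (fun x r ↦ C (bipartiteEdge x r)) a b S := by
  intro halt
  have halt' := halt.symm (isProperEdgeColoring_iff_isProperArray.1 hC)
  let T : Set R := {r | (∃ x ∈ S, C (bipartiteEdge x r) = a) ∧ ∃ x ∈ S, C (bipartiteEdge x r) = b}
  obtain ⟨v, hv, hsub⟩ := isAcyclic_iff_exists_subsingleton_neighborSet_inter.1
    (isAcyclicEdgeColoring_iff_forall_isAcyclic.1 hacyc a b) (.inl '' S ∪ .inr '' T)
    (hS.image _).inl
  rcases hv with ⟨x, hx, rfl⟩ | ⟨r, ⟨⟨x, hx, hxa⟩, ⟨x', hx', hxb⟩⟩, rfl⟩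
  · rw [neighborSet_twoColorSubgraph_inl] at hsub
    obtain ⟨r, hra, x₁, hx₁, hrb⟩ := halt x hx
    obtain ⟨r', hrb', x₂, hx₂, hra'⟩ := halt' x hx
    have hr : r = r' := Sum.inr_injective <| hsub
      ⟨⟨r, .inl hra, rfl⟩, .inr ⟨r, ⟨⟨x, hx, hra⟩, x₁, hx₁, hrb⟩, rfl⟩⟩
      ⟨⟨r', .inr hrb', rfl⟩, .inr ⟨r', ⟨⟨x₂, hx₂, hra'⟩, x, hx, hrb'⟩, rfl⟩⟩
    exact hab (hra.symm.trans (hr ▸ hrb'))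
  · rw [neighborSet_twoColorSubgraph_inr] at hsub
    have hx : x = x' := Sum.inl_injective <| hsub
      ⟨⟨x, .inl hxa, rfl⟩, .inl ⟨x, hx, rfl⟩⟩ ⟨⟨x', .inr hxb, rfl⟩, .inl ⟨x', hx', rfl⟩⟩
    exact hab (hxa.symm.trans (hx ▸ hxb))

theorem IsAcyclicArray.isAcyclicEdgeColoring [Finite L] [Finite R]
    (hc : IsAcyclicArray fun x r ↦ C (bipartiteEdge x r)) : IsAcyclicEdgeColoring _ C := by
  refine isAcyclicEdgeColoring_iff_forall_isAcyclic.2 fun a b ↦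
    isAcyclic_iff_exists_subsingleton_neighborSet_inter.2 fun W hW ↦ ?_
  by_contra! hnbr
  have hrow : ∀ x, Sum.inl x ∈ W → a ≠ b ∧ ∃ r, Sum.inr r ∈ W ∧ C (bipartiteEdge x r) = a := by
    intro x hx
    have hnbr := hnbr _ hx
    rw [neighborSet_twoColorSubgraph_inl] at hnbr
    obtain ⟨_, ⟨⟨r, hr, rfl⟩, hrW⟩, _, ⟨⟨r', hr', rfl⟩, hrW'⟩, hne⟩ := hnbr
    have hcolor : C (bipartiteEdge x r) ≠ C (bipartiteEdge x r') :=
      fun h ↦ hne (congrArg _ (hc.row_injective x h))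
    grind
  have hcol : ∀ r, Sum.inr r ∈ W → ∃ x, Sum.inl x ∈ W ∧ C (bipartiteEdge x r) = b := by
    intro r hr
    have hnbr := hnbr _ hr
    rw [neighborSet_twoColorSubgraph_inr] at hnbr
    obtain ⟨_, ⟨⟨x, hx, rfl⟩, hxW⟩, _, ⟨⟨x', hx', rfl⟩, hxW'⟩, hne⟩ := hnbr
    have hcolor : C (bipartiteEdge x r) ≠ C (bipartiteEdge x' r) :=
      fun h ↦ hne (congrArg _ (hc.col_injective r h))
    grind
  obtain ⟨x, hx⟩ : ∃ x, Sum.inl x ∈ W := by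
    obtain ⟨x | r, hv⟩ := hW
    · exact ⟨x, hv⟩
    · exact (hcol r hv).imp fun _ ↦ And.left
  refine hc.not_isAlternatingOn (hrow x hx).1 (S := Sum.inl ⁻¹' W) ⟨x, hx⟩ fun x hx ↦ ?_
  obtain ⟨-, r, hr, hra⟩ := hrow x hx
  exact ⟨r, hra, hcol r hr⟩

theorem exists_acyclicEdgeColoring_iff_exists_isAcyclicArray [Finite L] [Finite R] :
    (∃ C : (completeBipartiteGraph L R).edgeSet → Fin k,
      IsProperEdgeColoring _ C ∧ IsAcyclicEdgeColoring _ C) ↔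
      ∃ c : L → R → Fin k, IsAcyclicArray c := by
  constructor
  · rintro ⟨C, hC, hacyc⟩
    exact ⟨fun x r ↦ C (bipartiteEdge x r), isProperEdgeColoring_iff_isProperArray.1 hC,
      fun _ _ hab _ hS ↦ hacyc.not_isAlternatingOn hC hab hS⟩
  · rintro ⟨c, hc⟩
    obtain ⟨C, hC⟩ := exists_edgeColoring_bipartiteEdge_eq c
    have hC' : IsAcyclicArray fun x r ↦ C (bipartiteEdge x r) := by simpa only [hC] using hc
    exact ⟨C, isProperEdgeColoring_iff_isProperArray.2 hC'.toIsProperArray,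
      hC'.isAcyclicEdgeColoring⟩

end ColorArray

theorem sign_eq_neg_neg_one_pow_card {α : Type*} [Fintype α] [DecidableEq α] {f : Equiv.Perm α}
    {s : Finset α} {y : α} (hy : y ∈ s) (hfix : ∀ x ∉ s, f x = x)
    (hcycle : ∀ x ∈ s, f.SameCycle y x) : f.sign = -(-1) ^ s.card := by
  rcases (show s.Nonempty from ⟨y, hy⟩).exists_eq_singleton_or_nontrivial with ⟨z, rfl⟩ | hs
  · have hfz : f z = z := by
      by_contra hne
      exact hne (f.injective (hfix (f z) (by simpa using hne)))
    have hf : f = 1 := by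
      ext x
      by_cases hx : x = z
      · rw [hx, hfz, Equiv.Perm.one_apply]
      · exact hfix x (by simpa using hx)
    simp [hf]
  · have hsupp : f.support = s := by
      ext x
      rw [Equiv.Perm.mem_support]
      refine ⟨fun hx ↦ by_contra fun hxs ↦ hx (hfix x hxs), fun hxs hx ↦ ?_⟩
      obtain ⟨z, hz, hzx⟩ := hs.exists_ne x
      exact hzx (((hcycle x hxs).symm.trans (hcycle z hz)).eq_of_left hx).symm
    have hf : f.IsCycle := by
      refine ⟨y, Equiv.Perm.mem_support.1 (hsupp ▸ hy), fun x hx ↦ hcycle x ?_⟩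
      exact hsupp ▸ Equiv.Perm.mem_support.2 hx
    rw [hf.sign, hsupp]

section LowerBound

variable {L R K : Type*} {c : L → L → K} {a b : K} {σ τ : Equiv.Perm L}

/-- No edge at row `x` has color `a`. -/
def Misses (c : L → R → K) (x : L) (a : K) : Prop := ∀ r, c x r ≠ a

/-- The permutation `σ` extends the partial matching from rows to columns formed by the edges of
color `a`. -/
def Completes (c : L → L → K) (a : K) (σ : Equiv.Perm L) : Prop := ∀ x r, c x r = a → σ x = r

theorem IsProperArray.exists_completes [Finite L] (hc : IsProperArray c) (a : K) :
    ∃ σ, Completes c a σ := by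
  classical
  have := Fintype.ofFinite L
  let f : L → L := fun x ↦ if hx : ∃ r, c x r = a then hx.choose else x
  have hf : ∀ x r, c x r = a → f x = r := by
    intro x r hr
    have hx : ∃ r, c x r = a := ⟨r, hr⟩
    rw [show f x = hx.choose from dif_pos hx]
    exact hc.row_injective x (hx.choose_spec.trans hr.symm)
  have hinj : Set.InjOn f {x | ∃ r, c x r = a} := by
    rintro x ⟨r, hr⟩ x' ⟨r', hr'⟩ hxx'
    rw [hf x r hr, hf x' r' hr'] at hxx'
    subst hxx'
    exact hc.col_injective r (hr.trans hr'.symm)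
  obtain ⟨g, hg⟩ := Set.MapsTo.exists_equiv_extend_of_card_eq (t := Finset.univ)
    Finset.card_univ.symm (fun x _ ↦ Finset.mem_univ (f x)) hinj
  exact ⟨g.trans (Equiv.subtypeUnivEquiv Finset.mem_univ), fun x r hr ↦
    (hg x ⟨r, hr⟩).trans (hf x r hr)⟩

theorem IsAcyclicArray.exists_sameCycle_misses (hc : IsAcyclicArray c) (hab : a ≠ b)
    (hσ : Completes c a σ) (hτ : Completes c b τ) (x : L) :
    ∃ y, (τ⁻¹ * σ).SameCycle x y ∧ (Misses c y a ∨ Misses c y b) := by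
  by_contra! hfull
  simp only [Misses, not_forall, not_not] at hfull
  refine hc.not_isAlternatingOn hab (S := {y | (τ⁻¹ * σ).SameCycle x y}) ⟨x, .refl _ _⟩
    fun y hy ↦ ?_
  obtain ⟨⟨r, hr⟩, -⟩ := hfull y hy
  have hy' : (τ⁻¹ * σ).SameCycle x (τ⁻¹ r) := hσ y r hr ▸ hy.apply_right
  obtain ⟨-, r', hr'⟩ := hfull _ hy'
  obtain rfl : r = r' := (τ.apply_symm_apply r).symm.trans (hτ _ _ hr')
  exact ⟨r, hr, τ⁻¹ r, hy', hr'⟩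

theorem IsAcyclicArray.exists_ne_misses [Nontrivial L] (hc : IsAcyclicArray c) (hab : a ≠ b)
    (hσ : Completes c a σ) (hτ : Completes c b τ) {x : L} (hx : (τ⁻¹ * σ) x = x) :
    ∃ y ≠ x, Misses c y a ∨ Misses c y b := by
  obtain ⟨z, hz⟩ := exists_ne x
  obtain ⟨y, hzy, hy⟩ := hc.exists_sameCycle_misses hab hσ hτ z
  refine ⟨y, fun hyx ↦ hz ?_, hy⟩
  subst hyx
  exact hzy.eq_of_right hx

variable [Fintype L]

theorem IsAcyclicArray.sign_inv_mul_eq_one [DecidableEq L] (hc : IsAcyclicArray c)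
    (hL : Odd (Fintype.card L)) (hab : a ≠ b) (hσ : Completes c a σ) (hτ : Completes c b τ) {l : L}
    (hl : ∀ y, Misses c y a ∨ Misses c y b → y = l) : (τ⁻¹ * σ).sign = 1 := by
  have hcycle : ∀ x ∈ Finset.univ, (τ⁻¹ * σ).SameCycle l x := fun x _ ↦ by
    obtain ⟨y, hxy, hy⟩ := hc.exists_sameCycle_misses hab hσ hτ x
    exact hl y hy ▸ hxy.symm
  rw [sign_eq_neg_neg_one_pow_card (Finset.mem_univ l) (by simp) hcycle, Finset.card_univ,
    hL.neg_one_pow, neg_neg]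

theorem IsAcyclicArray.sign_inv_mul_eq_neg_one [DecidableEq L] (hc : IsAcyclicArray c)
    (hL : Odd (Fintype.card L)) (hab : a ≠ b) (hσ : Completes c a σ) (hτ : Completes c b τ)
    {l l' : L} (hll' : l' ≠ l) (hfix : (τ⁻¹ * σ) l = l)
    (hl : ∀ y, Misses c y a ∨ Misses c y b → y = l ∨ y = l') :
    (τ⁻¹ * σ).sign = -1 := by
  have hcycle : ∀ x ∈ Finset.univ.erase l, (τ⁻¹ * σ).SameCycle l' x := fun x hx ↦ by
    obtain ⟨y, hxy, hy⟩ := hc.exists_sameCycle_misses hab hσ hτ x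
    rcases hl y hy with rfl | rfl
    · exact absurd (hxy.eq_of_right hfix) (Finset.ne_of_mem_erase hx)
    · exact hxy.symm
  have hcard : Even (Finset.univ.erase l).card := by
    rw [Finset.card_erase_of_mem (Finset.mem_univ l), Finset.card_univ]
    exact hL.tsub_odd odd_one
  rw [sign_eq_neg_neg_one_pow_card (by simpa using hll') (by simpa using hfix) hcycle,
    hcard.neg_one_pow]

theorem exists_forall_notMem_range_iff_eq [Fintype K] {f : L → K} (hf : f.Injective)
    (hK : Fintype.card K = Fintype.card L + 1) : ∃ a, ∀ b, b ∉ Set.range f ↔ a = b := by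
  classical
  have hcard : (Finset.univ.image f)ᶜ.card = 1 := by
    rw [Finset.card_compl, Finset.card_image_of_injective _ hf, Finset.card_univ]
    omega
  obtain ⟨a, ha⟩ := Finset.card_eq_one.1 hcard
  refine ⟨a, fun b ↦ ?_⟩
  simpa [eq_comm] using Finset.ext_iff.1 ha b

theorem IsProperArray.exists_forall_misses_iff_eq [Fintype K] (hc : IsProperArray c)
    (hK : Fintype.card K = Fintype.card L + 1) : ∃ m : L → K, ∀ x a, Misses c x a ↔ m x = a := by
  choose m hm using fun x ↦ exists_forall_notMem_range_iff_eq (hc.row_injective x) hK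
  exact ⟨m, fun x a ↦ by simp [Misses, ← hm]⟩

theorem injective_of_subsingleton_compl_range [Fintype K] {f : L → K}
    (hK : Fintype.card K = Fintype.card L + 1) (hf : (Set.range f)ᶜ.Subsingleton) :
    f.Injective := by
  classical
  have hcompl : (Finset.univ.image f)ᶜ.card ≤ 1 :=
    Finset.card_le_one.2 (by simpa [Set.Subsingleton] using hf)
  have himage : (Finset.univ.image f).card = (Finset.univ : Finset L).card := by
    have hle := Finset.card_image_le (f := f) (s := Finset.univ)
    have hadd := Finset.card_compl_add_card (Finset.univ.image f)
    rw [Finset.card_univ] at hle ⊢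
    omega
  exact Set.injOn_univ.1 (by simpa using Finset.card_image_iff.1 himage)

theorem IsAcyclicArray.missingColor_injective [Nonempty L] [Fintype K] (hc : IsAcyclicArray c)
    (hK : Fintype.card K = Fintype.card L + 1) {m : L → K} (hm : ∀ x a, Misses c x a ↔ m x = a) :
    m.Injective := by
  refine injective_of_subsingleton_compl_range hK fun a ha b hb ↦ by_contra fun hab ↦ ?_
  obtain ⟨σ, hσ⟩ := hc.exists_completes a
  obtain ⟨τ, hτ⟩ := hc.exists_completes b
  obtain ⟨y, -, hy⟩ := hc.exists_sameCycle_misses hab hσ hτ (Classical.arbitrary L)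
  simp only [hm] at hy
  exact hy.elim (fun h ↦ ha ⟨y, h⟩) (fun h ↦ hb ⟨y, h⟩)

theorem IsAcyclicArray.card_ne_card_add_one [Nontrivial L] [Fintype K] (hc : IsAcyclicArray c)
    (hL : Odd (Fintype.card L)) : Fintype.card K ≠ Fintype.card L + 1 := by
  classical
  intro hK
  obtain ⟨m, hm⟩ := hc.exists_forall_misses_iff_eq hK
  have hinj := hc.missingColor_injective hK hm
  obtain ⟨c₀, hc₀⟩ := exists_forall_notMem_range_iff_eq hinj hK
  have hfree : ∀ y, m y ≠ c₀ := fun y hy ↦ (hc₀ c₀).2 rfl ⟨y, hy⟩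
  choose σ hσ using hc.exists_completes
  obtain ⟨l⟩ := (inferInstance : Nonempty L)
  -- The edge joining `l` to `σ (m l) l` has another color `b`, so `l` is fixed by following
  -- `σ (m l)` and going back along `σ b`.
  set b := c l (σ (m l) l) with hb
  have hlb : m l ≠ b := fun h ↦ (hm l b).2 h _ hb.symm
  have hfix : ((σ b)⁻¹ * σ (m l)) l = l := by
    rw [Equiv.Perm.mul_apply, Equiv.Perm.inv_eq_iff_eq]
    exact (hσ b l _ hb.symm).symm
  obtain ⟨l', hl', hmiss⟩ := hc.exists_ne_misses hlb (hσ _) (hσ _) hfix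
  simp only [hm] at hmiss
  have hl'b : m l' = b := hmiss.resolve_left fun h ↦ hl' (hinj h)
  have hneg : ((σ b)⁻¹ * σ (m l)).sign = -1 := by
    refine hc.sign_inv_mul_eq_neg_one hL hlb (hσ _) (hσ _) hl' hfix fun y hy ↦ ?_
    rw [hm, hm] at hy
    exact hy.imp (fun h ↦ hinj h) (fun h ↦ hinj (h.trans hl'b.symm))
  have hpos : ∀ x, ((σ c₀)⁻¹ * σ (m x)).sign = 1 := by
    refine fun x ↦ hc.sign_inv_mul_eq_one hL (hfree x) (hσ _) (hσ _) (l := x) fun y hy ↦ ?_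
    rw [hm, hm] at hy
    exact hinj (hy.resolve_right (hfree y))
  have hfactor : (σ b)⁻¹ * σ (m l) = ((σ c₀)⁻¹ * σ b)⁻¹ * ((σ c₀)⁻¹ * σ (m l)) := by group
  rw [hfactor, Equiv.Perm.sign_mul, Equiv.Perm.sign_inv, hpos l, ← hl'b, hpos l'] at hneg
  exact absurd hneg (by decide)

theorem IsAcyclicArray.card_add_two_le [Nontrivial L] [Fintype K] (hc : IsAcyclicArray c)
    (hL : Odd (Fintype.card L)) : Fintype.card L + 2 ≤ Fintype.card K := by
  classical
  by_contra! hK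
  obtain ⟨φ⟩ : Nonempty (K ↪ Fin (Fintype.card L + 1)) :=
    Function.Embedding.nonempty_of_card_le (by rw [Fintype.card_fin]; omega)
  exact (hc.relabel Function.injective_id Function.injective_id φ.injective).card_ne_card_add_one hL
    (Fintype.card_fin _)

end LowerBound

section Shear

open Equiv Equiv.Perm

theorem sameCycle_map_of_mul_eq {α : Type*} {f f' g : Perm α} {x y : α} (hxy : f.SameCycle x y)
    (h : f' * g = g * f) : f'.SameCycle (g x) (g y) :=
  eq_mul_inv_of_mul_eq h ▸ hxy.conj

theorem forall_sameCycle_of_mul_eq {α : Type*} {f f' g : Perm α}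
    (hf : ∀ x y, f.SameCycle x y) (h : f' * g = g * f) (x y : α) : f'.SameCycle x y := by
  simpa using sameCycle_map_of_mul_eq (hf (g⁻¹ x) (g⁻¹ y)) h

/-- The permutation `(i, j) ↦ (i, j + s)` of the plane, with an extra shift by `e` on the line
`i = 0`. -/
def sndShear {F : Type*} [AddGroup F] [DecidableEq F] (s e : F) : Perm (F × F) :=
  prodShear (Equiv.refl F) fun i ↦ Equiv.addRight (s + if i = 0 then e else 0)

/-- The permutation `(i, j) ↦ (i + t, j)` of the plane, with an extra shift by `d` on the line
`j = 0`. -/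
def fstShear {F : Type*} [AddGroup F] [DecidableEq F] (t d : F) : Perm (F × F) :=
  (prodComm F F).trans ((sndShear t d).trans (prodComm F F))

section AddCommGroup

variable {F : Type*} [AddCommGroup F] [DecidableEq F]

theorem sndShear_apply (s e i j : F) :
    sndShear s e (i, j) = (i, j + (s + if i = 0 then e else 0)) := rfl

theorem fstShear_apply (t d i j : F) :
    fstShear t d (i, j) = (i + (t + if j = 0 then d else 0), j) := rfl

theorem sndShear_add (s s' e e' : F) :
    sndShear (s + s') (e + e') = sndShear s e * sndShear s' e' := by
  ext ⟨i, j⟩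
  · rfl
  · simp only [Perm.mul_apply, sndShear_apply]
    split_ifs <;> abel

theorem fstShear_add (t t' d d' : F) :
    fstShear (t + t') (d + d') = fstShear t d * fstShear t' d' := by
  rw [fstShear, sndShear_add]
  rfl

end AddCommGroup

section Field

variable {F : Type*} [Field F] [DecidableEq F] (u v : Fˣ)

theorem prodCongr_mulLeft_mul_sndShear (s e : F) :
    (Units.mulLeft u).prodCongr (Units.mulLeft v) * sndShear s e =
      sndShear (v * s) (v * e) * (Units.mulLeft u).prodCongr (Units.mulLeft v) := by
  ext ⟨i, j⟩ <;> simp [sndShear_apply, mul_add]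

theorem prodCongr_mulLeft_mul_fstShear (t d : F) :
    (Units.mulLeft u).prodCongr (Units.mulLeft v) * fstShear t d =
      fstShear (u * t) (u * d) * (Units.mulLeft u).prodCongr (Units.mulLeft v) := by
  ext ⟨i, j⟩ <;> simp [fstShear_apply, mul_add]

theorem forall_sameCycle_shears_mul {s e t d : F}
    (h : ∀ x y, (sndShear s e * fstShear t d).SameCycle x y) (x y : F × F) :
    (sndShear (v * s) (v * e) * fstShear (u * t) (u * d)).SameCycle x y := by
  refine forall_sameCycle_of_mul_eq h (g := (Units.mulLeft u).prodCongr (Units.mulLeft v)) ?_ x y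
  rw [mul_assoc, ← prodCongr_mulLeft_mul_fstShear, ← mul_assoc, ← prodCongr_mulLeft_mul_sndShear,
    mul_assoc]

end Field

section ZMod

variable {p : ℕ} [Fact p.Prime]

theorem zmod_induction {P : ZMod p → Prop} (zero : P 0)
    (add_one : ∀ x, x + 1 ≠ 0 → P x → P (x + 1)) (x : ZMod p) : P x := by
  have hcast : ∀ k : ℕ, k < p → P k := by
    intro k
    induction k with
    | zero => exact fun _ ↦ by simpa using zero
    | succ k ih =>
      intro hk
      rw [Nat.cast_succ]
      refine add_one _ (fun h ↦ ?_) (ih (Nat.lt_of_succ_lt hk))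
      rw [← Nat.cast_succ, ZMod.natCast_eq_zero_iff] at h
      exact Nat.not_dvd_of_pos_of_lt k.succ_pos hk h
  simpa using hcast x.val x.val_lt

theorem forall_of_forall_add {P : ZMod p → Prop} {s : ZMod p} (hs : s ≠ 0)
    (hadd : ∀ x, P x → P (x + s)) {x₀ : ZMod p} (hx₀ : P x₀) (x : ZMod p) : P x := by
  have hmul : ∀ m : ZMod p, P (x₀ + m * s) := fun m ↦ by
    induction m using zmod_induction with
    | zero => simpa using hx₀
    | add_one m _ ih => simpa only [add_one_mul, add_assoc] using hadd _ ih
  simpa [div_mul_cancel₀ _ hs] using hmul ((x - x₀) / s)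

theorem sameCycle_diagonal (d e J : ZMod p) :
    (sndShear 1 e * fstShear 1 d).SameCycle (0, J) (-J, 0) := by
  set T := sndShear 1 e * fstShear 1 d
  have hrun : ∀ m, T.SameCycle (0, J) (m, J + m) ∨ T.SameCycle (0, J) (-J, 0) := fun m ↦ by
    induction m using zmod_induction with
    | zero => exact .inl (by simp [SameCycle.rfl])
    | add_one m hm ih =>
      rcases ih with ih | ih
      · by_cases hJ : J + m = 0
        · right
          rwa [hJ, eq_neg_of_add_eq_zero_right hJ] at ih
        · left
          have hstep : T (m, J + m) = (m + 1, J + (m + 1)) := by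
            simp [T, fstShear_apply, sndShear_apply, hJ, hm, add_assoc]
          exact hstep ▸ ih.apply_right
      · exact .inr ih
  simpa using hrun (-J)

theorem sameCycle_antidiagonal (d e i : ZMod p) :
    (fstShear 1 d * sndShear 1 e).SameCycle (i, 0) (0, -i) :=
  sameCycle_map_of_mul_eq (sameCycle_diagonal e d i) (g := prodComm _ _) rfl

theorem sameCycle_add_sub (d e i : ZMod p) :
    (sndShear 1 e * fstShear 1 d).SameCycle (i, 0) (i + (d - e), 0) := by
  set A := fstShear 1 d
  set B := sndShear 1 e
  have hfst : A⁻¹ (i + (1 + d), 0) = (i, 0) := by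
    rw [Perm.inv_eq_iff_eq]
    simp [A, fstShear_apply]
  have hsnd : (B * A) (A⁻¹ (0, -(i + (1 + d)))) = (0, -(i + (d - e))) := by
    simp [B, sndShear_apply]
    ring
  have hconj : (B * A).SameCycle (A⁻¹ (i + (1 + d), 0)) (A⁻¹ (0, -(i + (1 + d)))) :=
    sameCycle_map_of_mul_eq (sameCycle_antidiagonal d e _) (by simp [A, B])
  have hdiag := sameCycle_diagonal d e (-(i + (d - e)))
  rw [neg_neg, ← hsnd] at hdiag
  exact hfst ▸ hconj.trans (hdiag.of_apply_left)

theorem exists_sameCycle_snd_eq_zero (d e : ZMod p) (x : ZMod p × ZMod p) :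
    ∃ i, (sndShear 1 e * fstShear 1 d).SameCycle x (i, 0) := by
  by_contra! hx
  set T := sndShear 1 e * fstShear 1 d
  have hrun : ∀ m, ∃ j, T.SameCycle x (x.1 + m, j) := fun m ↦ by
    induction m using zmod_induction with
    | zero => exact ⟨x.2, by simp [SameCycle.rfl]⟩
    | add_one m _ ih =>
      obtain ⟨j, hj⟩ := ih
      have hj0 : j ≠ 0 := by
        rintro rfl
        exact hx _ hj
      have hstep : (T (x.1 + m, j)).1 = x.1 + (m + 1) := by
        simp [T, fstShear_apply, sndShear_apply, hj0, add_assoc]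
      exact ⟨(T (x.1 + m, j)).2, by simpa only [← hstep] using hj.apply_right⟩
  obtain ⟨j, hj⟩ := hrun (-x.1)
  rw [add_neg_cancel] at hj
  exact hx _ (hj.trans (sameCycle_diagonal d e j))

theorem forall_sameCycle_shears_one {d e : ZMod p} (hde : d ≠ e) (x y : ZMod p × ZMod p) :
    (sndShear 1 e * fstShear 1 d).SameCycle x y := by
  obtain ⟨i, hi⟩ := exists_sameCycle_snd_eq_zero d e x
  obtain ⟨i', hi'⟩ := exists_sameCycle_snd_eq_zero d e y
  have haxis : ∀ k, (sndShear 1 e * fstShear 1 d).SameCycle (i, 0) (k, 0) :=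
    forall_of_forall_add (sub_ne_zero.2 hde) (fun k hk ↦ hk.trans (sameCycle_add_sub d e k)) .rfl
  exact hi.trans ((haxis i').trans hi'.symm)

theorem forall_sameCycle_shears_zero_one (x y : ZMod p × ZMod p) :
    (sndShear (1 : ZMod p) 0 * fstShear 0 1).SameCycle x y := by
  set T : Perm (ZMod p × ZMod p) := sndShear 1 0 * fstShear 0 1
  have hline : ∀ i j, T.SameCycle (i, 1) (i, 1 + j) := fun i j ↦ by
    induction j using zmod_induction with
    | zero => simp [SameCycle.rfl]
    | add_one j hj ih =>
      have hstep : T (i, 1 + j) = (i, 1 + (j + 1)) := by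
        have hj' : 1 + j ≠ 0 := by rwa [add_comm]
        simp [T, fstShear_apply, sndShear_apply, hj', add_assoc]
      exact hstep ▸ ih.apply_right
  have hcarry : ∀ i, T.SameCycle (i, 1) (i + 1, 1) := fun i ↦ by
    have hstep : T (i, 1 + -1) = (i + 1, 1) := by simp [T, fstShear_apply, sndShear_apply]
    exact hstep ▸ (hline i (-1)).apply_right
  have hone : ∀ i, T.SameCycle (x.1, 1) (i, 1) :=
    forall_of_forall_add one_ne_zero (fun i hi ↦ hi.trans (hcarry i)) .rfl
  have hx := hline x.1 (x.2 - 1)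
  have hy := hline y.1 (y.2 - 1)
  rw [add_sub_cancel] at hx hy
  exact hx.symm.trans ((hone y.1).trans hy)

theorem forall_sameCycle_shears_of_ne_zero {s t d e : ZMod p} (hs : s ≠ 0) (ht : t ≠ 0)
    (h : d * s ≠ e * t) (x y : ZMod p × ZMod p) :
    (sndShear s e * fstShear t d).SameCycle x y := by
  have hde : d / t ≠ e / s := by rwa [Ne, div_eq_div_iff ht hs]
  have hmul := forall_sameCycle_shears_mul (.mk0 t ht) (.mk0 s hs)
    (forall_sameCycle_shears_one hde) x y
  simpa [mul_div_cancel₀ _ hs, mul_div_cancel₀ _ ht] using hmul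

theorem forall_sameCycle_sndShear_mul_fstShear_zero {s d : ZMod p} (hs : s ≠ 0) (hd : d ≠ 0)
    (x y : ZMod p × ZMod p) : (sndShear s 0 * fstShear 0 d).SameCycle x y := by
  have hmul := forall_sameCycle_shears_mul (.mk0 d hd) (.mk0 s hs)
    forall_sameCycle_shears_zero_one x y
  simpa using hmul

theorem forall_sameCycle_sndShear_zero_mul_fstShear {t e : ZMod p} (ht : t ≠ 0) (he : e ≠ 0)
    (x y : ZMod p × ZMod p) : (sndShear 0 e * fstShear t 0).SameCycle x y :=
  forall_sameCycle_of_mul_eq (forall_sameCycle_sndShear_mul_fstShear_zero ht he)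
    (g := prodComm _ _ * fstShear 0 e) rfl x y

end ZMod

end Shear

section Construction

section Field

variable {F : Type*} [Field F] [DecidableEq F] {ω : F} {x x' r r' g g' : F × F}
  {S : Set (F × F)}

/-- The base color `g` consists of the edges joining row `rowShear ω g q` to column `colShear g q`,
for `q : F × F`. -/
def rowShear (ω : F) (g : F × F) : Equiv.Perm (F × F) := sndShear g.1 (ω * g.2)

/-- The column counterpart of `rowShear`. -/
def colShear (g : F × F) : Equiv.Perm (F × F) := fstShear g.2 g.1

theorem rowShear_add : rowShear ω (g + g') = rowShear ω g * rowShear ω g' := by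
  rw [rowShear, Prod.fst_add, Prod.snd_add, mul_add, sndShear_add]
  rfl

theorem colShear_add : colShear (g + g') = colShear g * colShear g' :=
  fstShear_add _ _ _ _

/-- The base color of the edge joining row `x = (i, y)` to column `r = (z, j)`: the solution `g` of
`x = rowShear ω g (i, j)` and `r = colShear g (i, j)`. -/
def baseColor (ω : F) (x r : F × F) : F × F :=
  if x.1 = 0 then
    if r.2 = 0 then (r.1 - (x.2 - r.1) / (ω - 1), (x.2 - r.1) / (ω - 1))
    else (x.2 - r.2 - ω * r.1, r.1)
  else if r.2 = 0 then (x.2, r.1 - x.1 - x.2)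
  else (x.2 - r.2, r.1 - x.1)

/-- The edges recolored with the first extra color. -/
def InFirstMatching (ω : F) (x r : F × F) : Prop :=
  x.1 ≠ 0 ∧ r.2 = -x.1 ∧ x.2 = ω ^ 2 * r.1 - 2 * ω * x.1

/-- The edges recolored with the second extra color. The first matching meets exactly the base
colors `g` with `g.1 ≠ ω ^ 2 * g.2`; this one meets the others. -/
def InSecondMatching (ω : F) (x r : F × F) : Prop :=
  x.1 = 1 ∧ r.2 = -ω ∧ x.2 = ω ^ 2 * (r.1 - 1) - ω

instance : Decidable (InFirstMatching ω x r) := by unfold InFirstMatching; infer_instance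

instance : Decidable (InSecondMatching ω x r) := by unfold InSecondMatching; infer_instance

/-- The coloring of the rows and columns `F × F`: the base coloring, with two matchings recolored by
the extra colors `inr true` and `inr false` so as to break all cycles in two base colors. -/
def colorArray (ω : F) (x r : F × F) : (F × F) ⊕ Bool :=
  if InFirstMatching ω x r then .inr true
  else if InSecondMatching ω x r then .inr false
  else .inl (baseColor ω x r)

theorem eq_rowShear_of_baseColor_eq (hω : ω ≠ 1) (h : baseColor ω x r = g) :
    x = rowShear ω g (x.1, r.2) ∧ r = colShear g (x.1, r.2) := by
  subst h
  obtain ⟨i, y⟩ := x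
  obtain ⟨z, j⟩ := r
  have hω' : ω - 1 ≠ 0 := sub_ne_zero.2 hω
  by_cases hi : i = 0 <;> by_cases hj : j = 0 <;>
    simp [baseColor, rowShear, colShear, sndShear_apply, fstShear_apply, hi, hj]
  field_simp
  ring

theorem inFirstMatching_of_colorArray_eq (h : colorArray ω x r = .inr true) :
    InFirstMatching ω x r := by
  by_contra h₁
  rw [colorArray, if_neg h₁] at h
  split_ifs at h
  simp at h

theorem inSecondMatching_of_colorArray_eq (h : colorArray ω x r = .inr false) :
    InSecondMatching ω x r := by
  by_contra h₂
  rw [colorArray, if_neg h₂] at h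
  split_ifs at h
  simp at h

theorem colorArray_eq_inl_iff : colorArray ω x r = .inl g ↔
    ¬ InFirstMatching ω x r ∧ ¬ InSecondMatching ω x r ∧ baseColor ω x r = g := by
  unfold colorArray
  split_ifs <;> simp [*]

theorem eq_rowShear_of_colorArray_eq (hω : ω ≠ 1) (h : colorArray ω x r = .inl g) :
    x = rowShear ω g (x.1, r.2) ∧ r = colShear g (x.1, r.2) :=
  eq_rowShear_of_baseColor_eq hω (colorArray_eq_inl_iff.1 h).2.2

theorem isProperArray_colorArray (hω₀ : ω ≠ 0) (hω₁ : ω ≠ 1) : IsProperArray (colorArray ω) where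
  row_injective x r r' h := by
    rcases hk : colorArray ω x r' with g | _ | _ <;> rw [hk] at h
    · obtain ⟨hx, hr⟩ := eq_rowShear_of_colorArray_eq hω₁ h
      obtain ⟨hx', hr'⟩ := eq_rowShear_of_colorArray_eq hω₁ hk
      have hq : (x.1, r.2) = (x.1, r'.2) := (rowShear _ _).injective (hx.symm.trans hx')
      exact hr.trans ((congrArg _ hq).trans hr'.symm)
    · obtain ⟨-, hsnd, hfst⟩ := inSecondMatching_of_colorArray_eq h
      obtain ⟨-, hsnd', hfst'⟩ := inSecondMatching_of_colorArray_eq hk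
      refine Prod.ext (mul_left_cancel₀ (pow_ne_zero 2 hω₀) ?_) (hsnd.trans hsnd'.symm)
      linear_combination hfst' - hfst
    · obtain ⟨-, hsnd, hfst⟩ := inFirstMatching_of_colorArray_eq h
      obtain ⟨-, hsnd', hfst'⟩ := inFirstMatching_of_colorArray_eq hk
      refine Prod.ext (mul_left_cancel₀ (pow_ne_zero 2 hω₀) ?_) (hsnd.trans hsnd'.symm)
      linear_combination hfst' - hfst
  col_injective r x x' h := by
    rcases hk : colorArray ω x' r with g | _ | _ <;> simp only [hk] at h
    · obtain ⟨hx, hr⟩ := eq_rowShear_of_colorArray_eq hω₁ h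
      obtain ⟨hx', hr'⟩ := eq_rowShear_of_colorArray_eq hω₁ hk
      have hq : (x.1, r.2) = (x'.1, r.2) := (colShear _).injective (hr.symm.trans hr')
      exact hx.trans ((congrArg _ hq).trans hx'.symm)
    · obtain ⟨hfst, -, hsnd⟩ := inSecondMatching_of_colorArray_eq h
      obtain ⟨hfst', -, hsnd'⟩ := inSecondMatching_of_colorArray_eq hk
      exact Prod.ext (hfst.trans hfst'.symm) (hsnd.trans hsnd'.symm)
    · obtain ⟨-, hfst, hsnd⟩ := inFirstMatching_of_colorArray_eq h
      obtain ⟨-, hfst', hsnd'⟩ := inFirstMatching_of_colorArray_eq hk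
      have hx : x.1 = x'.1 := neg_injective (hfst.symm.trans hfst')
      exact Prod.ext hx (by rw [hsnd, hsnd', hx])

theorem misses_inl_rowShear (hω : ω ≠ 1) {q : F × F}
    (hq : InFirstMatching ω (rowShear ω g q) (colShear g q) ∨
      InSecondMatching ω (rowShear ω g q) (colShear g q)) :
    Misses (colorArray ω) (rowShear ω g q) (.inl g) := by
  intro r hr
  obtain ⟨hx, hr'⟩ := eq_rowShear_of_colorArray_eq hω hr
  rw [← (rowShear _ _).injective hx] at hr'
  rw [colorArray_eq_inl_iff, hr'] at hr
  exact hq.elim hr.1 hr.2.1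

theorem misses_inl_of_mul_eq (hω : ω ≠ 1) {w : F} (hw₀ : w ≠ 0)
    (hw : (ω - 1) ^ 2 * w = g.1 - ω ^ 2 * g.2) : Misses (colorArray ω) (w, g.1 - w) (.inl g) := by
  have hrow : rowShear ω g (w, -w) = (w, g.1 - w) := by
    simp [rowShear, sndShear_apply, hw₀, neg_add_eq_sub]
  have hcol : colShear g (w, -w) = (w + g.2, -w) := by
    simp [colShear, fstShear_apply, hw₀]
  rw [← hrow]
  refine misses_inl_rowShear hω (.inl ?_)
  rw [hrow, hcol]
  exact ⟨hw₀, rfl, by linear_combination -hw⟩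

theorem misses_inl_of_eq_mul (hω₀ : ω ≠ 0) (hω₁ : ω ≠ 1) (hg : g.1 = ω ^ 2 * g.2) :
    Misses (colorArray ω) (1, g.1 - ω) (.inl g) := by
  have hrow : rowShear ω g (1, -ω) = (1, g.1 - ω) := by
    simp [rowShear, sndShear_apply, neg_add_eq_sub]
  have hcol : colShear g (1, -ω) = (1 + g.2, -ω) := by
    simp [colShear, fstShear_apply, hω₀]
  rw [← hrow]
  refine misses_inl_rowShear hω₁ (.inr ?_)
  rw [hrow, hcol]
  exact ⟨rfl, rfl, by linear_combination hg⟩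

theorem exists_sub_one_sq_mul_eq {F : Type*} [Field F] {ω : F} (hω : ω ≠ 1) (t : F) :
    ∃ w, (ω - 1) ^ 2 * w = t :=
  ⟨_, mul_div_cancel₀ _ (pow_ne_zero 2 (sub_ne_zero.2 hω))⟩

theorem exists_misses_inl (hω₀ : ω ≠ 0) (hω₁ : ω ≠ 1) (g : F × F) :
    ∃ x, Misses (colorArray ω) x (.inl g) := by
  obtain ⟨w, hw⟩ := exists_sub_one_sq_mul_eq hω₁ (g.1 - ω ^ 2 * g.2)
  by_cases hw₀ : w = 0
  · rw [hw₀, mul_zero] at hw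
    exact ⟨_, misses_inl_of_eq_mul hω₀ hω₁ (sub_eq_zero.1 hw.symm)⟩
  · exact ⟨_, misses_inl_of_mul_eq hω₁ hw₀ hw⟩

theorem eq_of_colorArray_eq_inl_of_ne_zero (hω : ω ≠ 1) (h : colorArray ω x r = .inl g)
    (hx : x.1 ≠ 0) (hr : r.2 ≠ 0) : r = (x.1 + g.2, x.2 - g.1) := by
  obtain ⟨hx', hr'⟩ := eq_rowShear_of_colorArray_eq hω h
  simp only [rowShear, colShear, sndShear_apply, fstShear_apply, if_neg hx, if_neg hr,
    add_zero] at hx' hr'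
  rw [hr']
  exact Prod.ext rfl (eq_sub_of_add_eq (congrArg Prod.snd hx').symm)

/-- In the coordinate `q` of the rows `rowShear ω g q`, following the color `g` and then the color
`g'` is a product of two shears. -/
theorem rowShear_mem_of_isAlternatingOn (hω : ω ≠ 1)
    (halt : IsAlternatingOn (colorArray ω) (.inl g) (.inl g') S) {q : F × F}
    (hq : rowShear ω g q ∈ S) :
    rowShear ω g ((rowShear ω (g' - g) * colShear (-(g' - g))) q) ∈ S := by
  obtain ⟨r, hr, x', hx', hr'⟩ := halt _ hq
  obtain ⟨hqr, hr⟩ := eq_rowShear_of_colorArray_eq hω hr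
  obtain ⟨hx'r, hr'⟩ := eq_rowShear_of_colorArray_eq hω hr'
  rw [← (rowShear _ _).injective hqr] at hr
  have hcol : colShear (-(g' - g)) q = (x'.1, r.2) := by
    apply (colShear g').injective
    rw [← hr', hr, ← Equiv.Perm.mul_apply, ← colShear_add, neg_sub, add_sub_cancel]
  rwa [← Equiv.Perm.mul_apply, ← mul_assoc, ← rowShear_add, add_sub_cancel, Equiv.Perm.mul_apply,
    hcol, ← hx'r]

theorem mem_of_isAlternatingOn_inl_inr_true (hω : ω ≠ 1)
    (halt : IsAlternatingOn (colorArray ω) (.inl g) (.inr true) S) (hx : x ∈ S) (hx₀ : x.1 ≠ 0) :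
    (g.1 - x.2, ω ^ 2 * (x.1 + g.2) - 2 * ω * (g.1 - x.2)) ∈ S := by
  obtain ⟨r, hr, x', hmem, hr'⟩ := halt x hx
  obtain ⟨hx'₀, hsnd, hfst⟩ := inFirstMatching_of_colorArray_eq hr'
  have hr₀ : r.2 ≠ 0 := hsnd ▸ neg_ne_zero.2 hx'₀
  obtain rfl := eq_of_colorArray_eq_inl_of_ne_zero hω hr hx₀ hr₀
  have hfst' : x'.1 = g.1 - x.2 := by linear_combination hsnd
  have hx_eq : x' = (g.1 - x.2, ω ^ 2 * (x.1 + g.2) - 2 * ω * (g.1 - x.2)) :=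
    Prod.ext hfst' (hfst' ▸ hfst)
  exact hx_eq ▸ hmem

/-- Following a base color and then the first extra color is an affine map of the rows whose linear
part has characteristic polynomial `(X - ω) ^ 2`; its `k`-th iterate is therefore `ω ^ k` times an
affine function of `k`. -/
theorem orbit_mem_of_isAlternatingOn (hω : ω ≠ 1)
    (halt : IsAlternatingOn (colorArray ω) (.inl g) (.inr true) S) (hS : ∀ x ∈ S, x.1 ≠ 0)
    {w u η : F} (hw : (ω - 1) ^ 2 * w = g.1 - ω ^ 2 * g.2)
    (hmem : (w + u, g.1 - w - ω * (u + η)) ∈ S) (k : ℕ) :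
    (w + ω ^ k * (u + k * η), g.1 - w - ω ^ (k + 1) * (u + (k + 1) * η)) ∈ S := by
  induction k with
  | zero => simpa using hmem
  | succ k ih =>
    convert mem_of_isAlternatingOn_inl_inr_true hω halt ih (hS _ ih) using 2
    · push_cast
      ring
    · push_cast
      linear_combination -hw

variable [Finite F]

theorem fst_ne_zero_of_isAlternatingOn (hω₀ : ω ≠ 0) (hω₁ : ω ≠ 1)
    (halt : IsAlternatingOn (colorArray ω) (.inl g) (.inr true) S) (hx : x ∈ S) :
    x.1 ≠ 0 := by
  obtain ⟨r, hr, -⟩ := halt.symm (isProperArray_colorArray hω₀ hω₁) x hx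
  exact (inFirstMatching_of_colorArray_eq hr).1

theorem not_isAlternatingOn_inl_inr_false (hω₀ : ω ≠ 0) (hω₁ : ω ≠ 1) (hS : S.Nonempty) :
    ¬ IsAlternatingOn (colorArray ω) (.inl g) (.inr false) S := by
  intro halt
  have hfst : ∀ x ∈ S, x.1 = 1 := fun x hx ↦ by
    obtain ⟨r, hr, -⟩ := halt.symm (isProperArray_colorArray hω₀ hω₁) x hx
    exact (inSecondMatching_of_colorArray_eq hr).1
  have hsnd : ∀ x ∈ S, x.2 = g.1 - ω := fun x hx ↦ by
    obtain ⟨r, hr, x', -, hr'⟩ := halt x hx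
    have hr₂ : r.2 = -ω := (inSecondMatching_of_colorArray_eq hr').2.1
    have hrow := eq_of_colorArray_eq_inl_of_ne_zero hω₁ hr (hfst x hx ▸ one_ne_zero)
      (hr₂ ▸ neg_ne_zero.2 hω₀)
    linear_combination hr₂ - congrArg Prod.snd hrow
  obtain ⟨x, hx⟩ := hS
  obtain ⟨r, hr, x', hx', hr'⟩ := halt x hx
  obtain rfl : x = x' :=
    Prod.ext ((hfst x hx).trans (hfst x' hx').symm) ((hsnd x hx).trans (hsnd x' hx').symm)
  simp [hr] at hr'

theorem not_isAlternatingOn_inr_true_inr_false (hω₀ : ω ≠ 0) (hω₁ : ω ≠ 1) (hS : S.Nonempty) :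
    ¬ IsAlternatingOn (colorArray ω) (.inr true) (.inr false) S := by
  intro halt
  obtain ⟨x, hx⟩ := hS
  obtain ⟨r, hr, x', -, hr'⟩ := halt x hx
  obtain ⟨r', hr'', -⟩ := halt.symm (isProperArray_colorArray hω₀ hω₁) x hx
  have hx₁ : x.1 = 1 := (inSecondMatching_of_colorArray_eq hr'').1
  have hr₁ : r.2 = -x.1 := (inFirstMatching_of_colorArray_eq hr).2.1
  have hr₂ : r.2 = -ω := (inSecondMatching_of_colorArray_eq hr').2.1
  exact hω₁ (by linear_combination hr₂ - hr₁ + hx₁)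

end Field

section ZMod

variable {p : ℕ} [Fact p.Prime] {ω : ZMod p} {g g' : ZMod p × ZMod p} {S : Set (ZMod p × ZMod p)}

theorem exists_pow_mul_add_mul_eq (hω : ω ≠ 0) {η : ZMod p} (hη : η ≠ 0) (u t : ZMod p) :
    ∃ k : ℕ, ω ^ k * (u + k * η) = t := by
  refine ⟨(p - 1) * ((u - t) / η).val, ?_⟩
  have hp : 1 ≤ p := (Fact.out : p.Prime).one_le
  rw [pow_mul, ZMod.pow_card_sub_one_eq_one hω]
  push_cast [hp]
  simp [div_mul_cancel₀ _ hη]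

theorem forall_sameCycle_rowShear_mul_colShear_neg (hω : ¬ IsSquare ω) (hg : g ≠ 0)
    (x y : ZMod p × ZMod p) : (rowShear ω g * colShear (-g)).SameCycle x y := by
  obtain ⟨a, b⟩ := g
  have hω₀ : ω ≠ 0 := fun h ↦ hω (h ▸ .zero)
  change (sndShear a (ω * b) * fstShear (-b) (-a)).SameCycle x y
  by_cases ha : a = 0
  · have hb : b ≠ 0 := fun hb ↦ hg (by simp [ha, hb])
    rw [ha, neg_zero]
    exact forall_sameCycle_sndShear_zero_mul_fstShear (neg_ne_zero.2 hb) (mul_ne_zero hω₀ hb) x y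
  by_cases hb : b = 0
  · rw [hb, mul_zero, neg_zero]
    exact forall_sameCycle_sndShear_mul_fstShear_zero ha (neg_ne_zero.2 ha) x y
  refine forall_sameCycle_shears_of_ne_zero ha (neg_ne_zero.2 hb) (fun h ↦ hω ⟨a / b, ?_⟩) x y
  field_simp
  linear_combination h

theorem not_isAlternatingOn_inl_inl (hω₁ : ω ≠ 1) (hω : ¬ IsSquare ω) (hg : g ≠ g')
    (hS : S.Nonempty) : ¬ IsAlternatingOn (colorArray ω) (.inl g) (.inl g') S := by
  intro halt
  have hω₀ : ω ≠ 0 := fun h ↦ hω (h ▸ .zero)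
  set T := rowShear ω (g' - g) * colShear (-(g' - g))
  have horbit : ∀ q, rowShear ω g q ∈ S → ∀ n : ℕ, rowShear ω g ((T ^ n) q) ∈ S := by
    intro q hq n
    induction n with
    | zero => exact hq
    | succ n ih => exact pow_succ' T n ▸ rowShear_mem_of_isAlternatingOn hω₁ halt ih
  obtain ⟨x₀, hx₀⟩ := hS
  obtain ⟨x, hx⟩ := exists_misses_inl hω₀ hω₁ g
  obtain ⟨q₀, rfl⟩ := (rowShear ω g).surjective x₀
  obtain ⟨q, rfl⟩ := (rowShear ω g).surjective x
  have hcycle : T.SameCycle q₀ q :=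
    forall_sameCycle_rowShear_mul_colShear_neg hω (sub_ne_zero.2 hg.symm) q₀ q
  obtain ⟨n, -, -, rfl⟩ := hcycle.exists_pow_eq''
  obtain ⟨r, hr, -⟩ := halt _ (horbit q₀ hx₀ n)
  exact hx r hr

theorem exists_geometric_orbit_of_isAlternatingOn (hω₀ : ω ≠ 0) (hω₁ : ω ≠ 1)
    (halt : IsAlternatingOn (colorArray ω) (.inl g) (.inr true) S) (hS : S.Nonempty)
    {w : ZMod p} (hw : (ω - 1) ^ 2 * w = g.1 - ω ^ 2 * g.2) :
    ∃ u, ∀ k : ℕ, (w + ω ^ k * u, g.1 - w - ω ^ (k + 1) * u) ∈ S := by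
  obtain ⟨u, η, hmem⟩ : ∃ u η, (w + u, g.1 - w - ω * (u + η)) ∈ S := by
    obtain ⟨x, hx⟩ := hS
    refine ⟨x.1 - w, (g.1 - w - x.2) / ω - (x.1 - w), ?_⟩
    rwa [add_sub_cancel, add_sub_cancel, mul_div_cancel₀ _ hω₀, sub_sub_cancel]
  have hfst := fun x ↦ fst_ne_zero_of_isAlternatingOn hω₀ hω₁ halt (x := x)
  have horbit := orbit_mem_of_isAlternatingOn hω₁ halt hfst hw hmem
  obtain rfl : η = 0 := by
    by_contra hη
    obtain ⟨k, hk⟩ := exists_pow_mul_add_mul_eq hω₀ hη u (-w)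
    exact hfst _ (horbit k) (by simp [hk])
  exact ⟨u, by simpa only [mul_zero, add_zero] using horbit⟩

theorem not_isAlternatingOn_inl_inr_true (hω₀ : ω ≠ 0) (hω₁ : ω ≠ 1)
    (hω : ∀ t ≠ 0, ∃ k : ℕ, ω ^ k = t) (hS : S.Nonempty) :
    ¬ IsAlternatingOn (colorArray ω) (.inl g) (.inr true) S := by
  intro halt
  have hnot_misses : ∀ x ∈ S, ¬ Misses (colorArray ω) x (.inl g) := fun x hx hmiss ↦
    have ⟨r, hr, _⟩ := halt x hx
    hmiss r hr
  obtain ⟨w, hw⟩ := exists_sub_one_sq_mul_eq hω₁ (g.1 - ω ^ 2 * g.2)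
  obtain ⟨u, horbit⟩ := exists_geometric_orbit_of_isAlternatingOn hω₀ hω₁ halt hS hw
  by_cases hw₀ : w = 0
  · subst hw₀
    have hg : g.1 = ω ^ 2 * g.2 := by linear_combination -hw
    have hu : u ≠ 0 := by
      rintro rfl
      exact fst_ne_zero_of_isAlternatingOn hω₀ hω₁ halt (horbit 0) (by simp)
    obtain ⟨k, hk⟩ := hω u⁻¹ (inv_ne_zero hu)
    have hrow : (1, g.1 - ω) ∈ S := by simpa [pow_succ', mul_assoc, hk, hu] using horbit k
    exact hnot_misses _ hrow (misses_inl_of_eq_mul hω₀ hω₁ hg)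
  · by_cases hu : u = 0
    · have hrow : (w, g.1 - w) ∈ S := by simpa [hu] using horbit 0
      exact hnot_misses _ hrow (misses_inl_of_mul_eq hω₁ hw₀ hw)
    · obtain ⟨k, hk⟩ := hω (-w / u) (div_ne_zero (neg_ne_zero.2 hw₀) hu)
      refine fst_ne_zero_of_isAlternatingOn hω₀ hω₁ halt (horbit k) ?_
      rw [hk, div_mul_cancel₀ _ hu, add_neg_cancel]

theorem isAcyclicArray_colorArray (hsq : ¬ IsSquare ω) (hω : ∀ t ≠ 0, ∃ k : ℕ, ω ^ k = t) :
    IsAcyclicArray (colorArray ω) := by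
  have hω₀ : ω ≠ 0 := fun h ↦ hsq (h ▸ .zero)
  have hω₁ : ω ≠ 1 := fun h ↦ hsq (h ▸ .one)
  have hproper := isProperArray_colorArray hω₀ hω₁
  refine ⟨hproper, ?_⟩
  rintro (g | _ | _) (g' | _ | _) hab S hS halt
  · exact not_isAlternatingOn_inl_inl hω₁ hsq (fun h ↦ hab (congrArg _ h)) hS halt
  · exact not_isAlternatingOn_inl_inr_false hω₀ hω₁ hS halt
  · exact not_isAlternatingOn_inl_inr_true hω₀ hω₁ hω hS halt
  · exact not_isAlternatingOn_inl_inr_false hω₀ hω₁ hS (halt.symm hproper)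
  · exact hab rfl
  · exact not_isAlternatingOn_inr_true_inr_false hω₀ hω₁ hS (halt.symm hproper)
  · exact not_isAlternatingOn_inl_inr_true hω₀ hω₁ hω hS (halt.symm hproper)
  · exact not_isAlternatingOn_inr_true_inr_false hω₀ hω₁ hS halt
  · exact hab rfl

end ZMod

end Construction

section ChromaticIndex

theorem exists_not_isSquare_and_forall_exists_pow_eq {p : ℕ} [Fact p.Prime] (hp : p ≠ 2) :
    ∃ ω : ZMod p, ¬ IsSquare ω ∧ ∀ t ≠ 0, ∃ k : ℕ, ω ^ k = t := by
  obtain ⟨ω, hω⟩ := IsCyclic.exists_monoid_generator (α := (ZMod p)ˣ)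
  have hpow : ∀ t : ZMod p, t ≠ 0 → ∃ k : ℕ, (ω : ZMod p) ^ k = t := fun t ht ↦ by
    obtain ⟨k, hk⟩ := Submonoid.mem_powers_iff _ _ |>.1 (hω (.mk0 t ht))
    exact ⟨k, by simpa using congrArg Units.val hk⟩
  refine ⟨ω, fun hsq ↦ ?_, hpow⟩
  obtain ⟨t, ht⟩ := FiniteField.exists_nonsquare (F := ZMod p) (by rwa [ZMod.ringChar_zmod_n])
  obtain ⟨k, rfl⟩ := hpow t fun h ↦ ht (h ▸ .zero)
  exact ht (hsq.pow k)

theorem exists_isAcyclicArray {p : ℕ} (hp : p.Prime) (hp₂ : p ≠ 2) :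
    ∃ c : Fin (p ^ 2) → Fin (p ^ 2) → Fin (p ^ 2 + 2), IsAcyclicArray c := by
  have := Fact.mk hp
  obtain ⟨ω, hsq, hω⟩ := exists_not_isSquare_and_forall_exists_pow_eq hp₂
  have hcard : Fintype.card (Fin (p ^ 2)) = Fintype.card (ZMod p × ZMod p) := by
    simp [ZMod.card, sq]
  have hcard' : Fintype.card ((ZMod p × ZMod p) ⊕ Bool) = Fintype.card (Fin (p ^ 2 + 2)) := by
    simp [ZMod.card, sq]
  have e := Fintype.equivOfCardEq hcard
  have e' := Fintype.equivOfCardEq hcard'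
  exact ⟨_, (isAcyclicArray_colorArray hsq hω).relabel e.injective e.injective e'.injective⟩

theorem stmt1_general (p : ℕ) (hp : p.Prime) (hodd : Odd p) :
    acyclicChromaticIndex (completeBipartiteGraph (Fin (p ^ 2)) (Fin (p ^ 2))) = p ^ 2 + 2 ∧
    (∃ C : (completeBipartiteGraph (Fin (p ^ 2)) (Fin (p ^ 2))).edgeSet → Fin (p ^ 2 + 2),
      IsProperEdgeColoring (completeBipartiteGraph (Fin (p ^ 2)) (Fin (p ^ 2))) C ∧
      IsAcyclicEdgeColoring (completeBipartiteGraph (Fin (p ^ 2)) (Fin (p ^ 2))) C) ∧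
    ∀ k : ℕ, k < p ^ 2 + 2 →
      ¬ ∃ C : (completeBipartiteGraph (Fin (p ^ 2)) (Fin (p ^ 2))).edgeSet → Fin k,
        IsProperEdgeColoring (completeBipartiteGraph (Fin (p ^ 2)) (Fin (p ^ 2))) C ∧
        IsAcyclicEdgeColoring (completeBipartiteGraph (Fin (p ^ 2)) (Fin (p ^ 2))) C := by
  have hupper := exists_acyclicEdgeColoring_iff_exists_isAcyclicArray.2
    (exists_isAcyclicArray hp (hodd.ne_two_of_dvd_nat dvd_rfl))
  have hlower : ∀ k, (∃ C : (completeBipartiteGraph (Fin (p ^ 2)) (Fin (p ^ 2))).edgeSet → Fin k,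
      IsProperEdgeColoring _ C ∧ IsAcyclicEdgeColoring _ C) → p ^ 2 + 2 ≤ k := fun k hk ↦ by
    obtain ⟨c, hc⟩ := exists_acyclicEdgeColoring_iff_exists_isAcyclicArray.1 hk
    have : Nontrivial (Fin (p ^ 2)) :=
      Fin.nontrivial_iff_two_le.2 (Nat.one_lt_pow two_ne_zero hp.one_lt)
    simpa using hc.card_add_two_le (by simpa using hodd.pow)
  exact ⟨(Nat.sInf_le hupper).antisymm (le_csInf ⟨_, hupper⟩ hlower), hupper,
    fun k hk hC ↦ (hlower k hC).not_gt hk⟩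

end ChromaticIndex

/-- For every odd prime `p ≥ 5`, `a'(K_{p²,p²}) = p² + 2`: `K_{p²,p²}` admits an
acyclic proper edge coloring with `p² + 2` colors and none with fewer colors. -/
theorem stmt1 (p : ℕ) (hp : p.Prime) (hodd : Odd p) (hp5 : 5 ≤ p) :
    acyclicChromaticIndex (completeBipartiteGraph (Fin (p ^ 2)) (Fin (p ^ 2))) = p ^ 2 + 2 ∧
    (∃ C : (completeBipartiteGraph (Fin (p ^ 2)) (Fin (p ^ 2))).edgeSet → Fin (p ^ 2 + 2),
      IsProperEdgeColoring (completeBipartiteGraph (Fin (p ^ 2)) (Fin (p ^ 2))) C ∧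
      IsAcyclicEdgeColoring (completeBipartiteGraph (Fin (p ^ 2)) (Fin (p ^ 2))) C) ∧
    ∀ k : ℕ, k < p ^ 2 + 2 →
      ¬ ∃ C : (completeBipartiteGraph (Fin (p ^ 2)) (Fin (p ^ 2))).edgeSet → Fin k,
        IsProperEdgeColoring (completeBipartiteGraph (Fin (p ^ 2)) (Fin (p ^ 2))) C ∧
        IsAcyclicEdgeColoring (completeBipartiteGraph (Fin (p ^ 2)) (Fin (p ^ 2))) C :=
  stmt1_general p hp hodd
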